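/- arXiv:2301.00751 — 2 statements merged into one kernel-verified Lean document; each statement's English description precedes it below -/
import Mathlib

section
/- Root structure of competing power nonlinearities in the sign-indefinite regime: let 0 < α₂ < α₁ and 1 < a₂ < α₁/α₂, and set f(r) := (r^{α₁} − 1) − a₂·(r^{α₂} − 1) for r ≥ 0. Then f has exactly two zeros in (0,∞): there is a unique ρ₁ ∈ (0,1) with f(ρ₁) = 0, one has f(1) = 0, and f(r) ≠ 0 for every r ∈ (0,∞) with r ≠ ρ₁ and r ≠ 1. Moreover f(r) > 0 for 0 < r < ρ₁, f(r) < 0 for ρ₁ < r < 1, and f(r) > 0 for r > 1. -/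
lemma aux_exists (p a : ℝ) (ha : 1 < a) (hap : a < p) :
    ∃ s : ℝ, 0 < s ∧ s < 1 ∧ s ^ p - 1 - a * (s - 1) = 0 := by
  have hp : 1 < p := ha.trans hap
  have hp0 : 0 < p := by linarith
  have ha0 : 0 < a := by linarith
  have hq : 0 < a / p := by positivity
  obtain ⟨t, ht⟩ : ∃ t : ℝ, t = (a / p) ^ (1 / (p - 1)) := ⟨_, rfl⟩
  have ht0 : 0 < t := by rw [ht]; positivity
  have ht1 : t < 1 := by
    rw [ht]
    exact Real.rpow_lt_one hq.le ((div_lt_one hp0).2 hap) (by apply one_div_pos.2; linarith)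
  have htp : t ^ (p - 1) = a / p := by
    rw [ht, ← Real.rpow_mul hq.le, one_div, inv_mul_cancel₀ (by linarith), Real.rpow_one]
  have htp' : p * t ^ p = a * t := by
    have h : t ^ p = t ^ (p - 1) * t := by
      rw [Real.rpow_sub_one ht0.ne']; field_simp
    rw [h, htp]; field_simp
  have hneg : t ^ p - 1 - a * (t - 1) < 0 := by
    have hb := one_add_mul_self_lt_rpow_one_add (s := 1 / t - 1) (p := p)
      (by have : 0 < 1 / t := by positivity
          linarith)
      (by have : 1 < 1 / t := (one_lt_div ht0).2 ht1
          linarith) hp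
    have htpp : 0 < t ^ p := by positivity
    rw [add_sub_cancel, Real.div_rpow zero_le_one ht0.le, Real.one_rpow, lt_div_iff₀ htpp] at hb
    have e : (1 + p * (1 / t - 1)) * t ^ p = t ^ p + (p * t ^ p) * (1 / t - 1) := by ring
    rw [e, htp'] at hb
    have e2 : a * t * (1 / t - 1) = a - a * t := by field_simp
    rw [e2] at hb
    linarith
  have hc : ContinuousOn (fun s : ℝ => s ^ p - 1 - a * (s - 1)) (Set.Icc 0 t) := by
    have := (Real.continuous_rpow_const hp0.le)
    fun_prop
  have h0 : (0:ℝ) < (fun s : ℝ => s ^ p - 1 - a * (s - 1)) 0 := by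
    simp only [Real.zero_rpow hp0.ne']; linarith
  obtain ⟨s, hs, hs'⟩ := intermediate_value_Ioo' ht0.le hc ⟨hneg, h0⟩
  exact ⟨s, hs.1, hs.2.trans ht1, hs'⟩

lemma aux_signs (p a s : ℝ) (hp : 1 < p) (hs0 : 0 < s) (hs1 : s < 1)
    (hs : s ^ p - 1 - a * (s - 1) = 0) :
    (∀ x, 0 < x → x < s → 0 < x ^ p - 1 - a * (x - 1)) ∧
    (∀ x, s < x → x < 1 → x ^ p - 1 - a * (x - 1) < 0) ∧
    (∀ x, 1 < x → 0 < x ^ p - 1 - a * (x - 1)) := by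
  have hc := strictConvexOn_rpow hp
  have m : ∀ {x : ℝ}, 0 < x → x ∈ Set.Ici (0:ℝ) := fun h => h.le
  have hsl : s ^ p = 1 + a * (s - 1) := by linarith
  refine ⟨fun x hx hxs => ?_, fun x hx hx1 => ?_, fun x hx => ?_⟩
  · have h := hc.slope_strict_mono_adjacent (m hx) (m one_pos) hxs hs1
    simp only [Real.one_rpow, hsl] at h
    rw [div_lt_div_iff₀ (by linarith) (by linarith)] at h
    nlinarith
  · have h := hc.slope_strict_mono_adjacent (m hs0) (m one_pos) hx hx1
    simp only [Real.one_rpow, hsl] at h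
    rw [div_lt_div_iff₀ (by linarith) (by linarith)] at h
    nlinarith
  · have h := hc.slope_strict_mono_adjacent (m hs0) (m (by linarith : 0 < x)) hs1 hx
    simp only [Real.one_rpow, hsl] at h
    rw [div_lt_div_iff₀ (by linarith) (by linarith)] at h
    nlinarith

/-- Root structure of competing power nonlinearities in the sign-indefinite regime:
for `0 < α₂ < α₁`, `1 < a₂ < α₁/α₂` and `f r = (r^α₁ - 1) - a₂ (r^α₂ - 1)`, `f` has
exactly two zeros in `(0,∞)`: a unique `ρ₁ ∈ (0,1)` and `1`, with `f > 0` on `(0,ρ₁)`,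
`f < 0` on `(ρ₁,1)` and `f > 0` on `(1,∞)`. -/
theorem root_structure_competing_powers
    (α₁ α₂ a₂ : ℝ) (hα₂ : 0 < α₂) (hα : α₂ < α₁)
    (ha₂ : 1 < a₂) (ha₂' : a₂ < α₁ / α₂) :
    ∃ ρ₁ ∈ Set.Ioo (0:ℝ) 1,
      ((ρ₁ ^ α₁ - 1) - a₂ * (ρ₁ ^ α₂ - 1) = 0) ∧
      (((1:ℝ) ^ α₁ - 1) - a₂ * ((1:ℝ) ^ α₂ - 1) = 0) ∧
      (∀ r : ℝ, 0 < r → r ≠ ρ₁ → r ≠ 1 → (r ^ α₁ - 1) - a₂ * (r ^ α₂ - 1) ≠ 0) ∧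
      (∀ r : ℝ, 0 < r → r < ρ₁ → 0 < (r ^ α₁ - 1) - a₂ * (r ^ α₂ - 1)) ∧
      (∀ r : ℝ, ρ₁ < r → r < 1 → (r ^ α₁ - 1) - a₂ * (r ^ α₂ - 1) < 0) ∧
      (∀ r : ℝ, 1 < r → 0 < (r ^ α₁ - 1) - a₂ * (r ^ α₂ - 1)) := by
  have ha : 1 < α₁ / α₂ := ha₂.trans ha₂'
  obtain ⟨s, hs0, hs1, hs⟩ := aux_exists _ _ ha₂ ha₂'
  obtain ⟨h1, h2, h3⟩ := aux_signs _ _ s ha hs0 hs1 hs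
  have key : ∀ r : ℝ, 0 < r → r ^ α₁ = (r ^ α₂) ^ (α₁ / α₂) := fun r hr => by
    rw [← Real.rpow_mul hr.le, mul_div_cancel₀ _ hα₂.ne']
  obtain ⟨ρ, hρ⟩ : ∃ ρ : ℝ, ρ = s ^ (1 / α₂) := ⟨_, rfl⟩
  have hρ0 : 0 < ρ := by rw [hρ]; positivity
  have hρs : ρ ^ α₂ = s := by
    rw [hρ, ← Real.rpow_mul hs0.le, one_div, inv_mul_cancel₀ hα₂.ne', Real.rpow_one]
  have hρ1 : ρ < 1 := by rw [hρ]; exact Real.rpow_lt_one hs0.le hs1 (by positivity)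
  have g1 : ∀ r : ℝ, 0 < r → r < ρ → 0 < (r ^ α₁ - 1) - a₂ * (r ^ α₂ - 1) := by
    intro r hr hrρ
    rw [key r hr]
    exact h1 _ (by positivity) (hρs ▸ Real.rpow_lt_rpow hr.le hrρ hα₂)
  have g2 : ∀ r : ℝ, ρ < r → r < 1 → (r ^ α₁ - 1) - a₂ * (r ^ α₂ - 1) < 0 := by
    intro r hr hr1
    have hr0 := hρ0.trans hr
    rw [key r hr0]
    exact h2 _ (hρs ▸ Real.rpow_lt_rpow hρ0.le hr hα₂) (Real.rpow_lt_one hr0.le hr1 hα₂)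
  have g3 : ∀ r : ℝ, 1 < r → 0 < (r ^ α₁ - 1) - a₂ * (r ^ α₂ - 1) := by
    intro r hr
    rw [key r (by linarith)]
    exact h3 _ (Real.one_lt_rpow hr hα₂)
  refine ⟨ρ, ⟨hρ0, hρ1⟩, ?_, by simp, ?_, g1, g2, g3⟩
  · rw [key ρ hρ0, hρs]; exact hs
  · intro r hr hne hne1
    rcases lt_or_gt_of_ne hne with h | h
    · exact (g1 r hr h).ne'
    · rcases lt_or_gt_of_ne hne1 with h' | h'
      · exact (g2 r h h').ne
      · exact (g3 r h').ne'
end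

section
/- Positivity of the potential of competing power nonlinearities when the focusing part is weak: let 0 < α₂ < α₁ and a₂ ≤ 1, set f(r) := (r^{α₁} − 1) − a₂·(r^{α₂} − 1) and F(ρ) := ∫₁^ρ f(r) dr. Then F(ρ) > 0 for every ρ ≥ 0 with ρ ≠ 1, and F(1) = 0. -/
/-- Positivity of the potential of competing power nonlinearities when the focusing
part is weak: for `0 < α₂ < α₁`, `a₂ ≤ 1`, `f r = (r^α₁ - 1) - a₂ (r^α₂ - 1)` and
`F ρ = ∫₁^ρ f`, one has `F ρ > 0` for every `ρ ≥ 0` with `ρ ≠ 1`, and `F 1 = 0`. -/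
theorem positivity_weak_focusing
    (α₁ α₂ a₂ : ℝ) (hα₂ : 0 < α₂) (hα : α₂ < α₁) (ha₂ : a₂ ≤ 1) :
    (∀ ρ : ℝ, 0 ≤ ρ → ρ ≠ 1 →
      0 < ∫ r in (1:ℝ)..ρ, ((r ^ α₁ - 1) - a₂ * (r ^ α₂ - 1))) ∧
    (∫ r in (1:ℝ)..(1:ℝ), ((r ^ α₁ - 1) - a₂ * (r ^ α₂ - 1))) = 0 := by
  refine ⟨fun ρ hρ hne => ?_, intervalIntegral.integral_same⟩
  have hc : Continuous fun r : ℝ => (r ^ α₁ - 1) - a₂ * (r ^ α₂ - 1) := by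
    have h1 := Real.continuous_rpow_const (q := α₁) (by linarith)
    have h2 := Real.continuous_rpow_const (q := α₂) hα₂.le
    fun_prop
  rcases lt_or_gt_of_ne hne with h | h
  · rw [intervalIntegral.integral_symm, ← intervalIntegral.integral_neg]
    refine intervalIntegral.intervalIntegral_pos_of_pos_on
      (hc.neg.intervalIntegrable _ _) (fun x hx => ?_) h
    have hx0 : 0 < x := lt_of_le_of_lt hρ hx.1
    have h1 : x ^ α₁ < x ^ α₂ := Real.rpow_lt_rpow_of_exponent_gt hx0 hx.2 hα
    have h2 : x ^ α₂ < 1 := Real.rpow_lt_one hx0.le hx.2 hα₂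
    nlinarith [mul_nonneg (sub_nonneg.2 ha₂) (sub_nonneg.2 h2.le)]
  · refine intervalIntegral.intervalIntegral_pos_of_pos_on
      (hc.intervalIntegrable _ _) (fun x hx => ?_) h
    have h1 : x ^ α₂ < x ^ α₁ := Real.rpow_lt_rpow_of_exponent_lt hx.1 hα
    have h2 : 1 < x ^ α₂ := Real.one_lt_rpow hx.1 hα₂
    nlinarith [mul_nonneg (sub_nonneg.2 ha₂) (sub_nonneg.2 h2.le)]
end
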